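/- Let μ > 0 and for T > 0 define K_{T,μ}(p) = (p²−μ)(e^{(p²−μ)/T}+1)/(e^{(p²−μ)/T}−1) for p ∈ ℝ³. Then m_μ(T) := (1/(4πμ)) ∫_{ℝ³} (1/K_{T,μ}(p) − 1/p²) dp satisfies m_μ(T) = μ^{−1/2}( ln(μ/T) + γ − 2 + ln(8/π) + o(1)) as T → 0⁺, where γ is Euler's constant. -/

import Mathlib

open MeasureTheory Real Filter

noncomputable def bcsD : ℝ → ℝ := dslope (fun x => 1 - Real.exp (-x)) 0

lemma bcsD_cont : Continuous bcsD := by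
  have h := (continuousOn_dslope (f := fun x : ℝ => 1 - Real.exp (-x)) (a := 0)
    (s := Set.univ) Filter.univ_mem).2 ⟨by fun_prop, by fun_prop⟩
  exact continuousOn_univ.1 h

lemma bcsD_eq {x : ℝ} (hx : x ≠ 0) : bcsD x = (1 - Real.exp (-x)) / x := by
  rw [bcsD, dslope_of_ne _ hx, slope_def_field]; simp

lemma log_exp_integral :
    IntegrableOn (fun t : ℝ => Real.log t * Real.exp (-t)) (Set.Ioi 0) ∧
    ∫ t in Set.Ioi (0:ℝ), Real.log t * Real.exp (-t) = -Real.eulerMascheroniConstant := by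
  have h1 := Complex.hasDerivAt_GammaIntegral (s := 1) (by simp)
  have h2 : HasDerivAt Complex.GammaIntegral (-(Real.eulerMascheroniConstant : ℂ)) 1 := by
    refine Complex.hasDerivAt_Gamma_one.congr_of_eventuallyEq ?_
    have : ∀ᶠ s : ℂ in nhds 1, 0 < s.re :=
      (isOpen_lt continuous_const Complex.continuous_re).mem_nhds (by simp)
    filter_upwards [this] with s hs
    exact (Complex.Gamma_eq_integral hs).symm
  have h3 := h1.unique h2
  have h4 : ∫ t in Set.Ioi (0:ℝ), Real.log t * Real.exp (-t) = -Real.eulerMascheroniConstant := by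
    have : (∫ t : ℝ in Set.Ioi 0, (t : ℂ) ^ ((1:ℂ) - 1) * (Real.log t * Real.exp (-t))) =
        ((∫ t in Set.Ioi (0:ℝ), Real.log t * Real.exp (-t) : ℝ) : ℂ) := by
      rw [← integral_complex_ofReal]
      congr 1
      ext t
      simp
    rw [this] at h3
    exact_mod_cast h3
  refine ⟨?_, h4⟩
  by_contra hn
  rw [integral_undef hn] at h4
  have := Real.one_half_lt_eulerMascheroniConstant
  linarith

noncomputable def bcsE (R : ℝ) : ℝ := ∫ x in (0:ℝ)..R, bcsD x

lemma bcsE_eq {R : ℝ} (hR : 0 < R) :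
    bcsE R = (1 - Real.exp (-R)) * Real.log R -
      ∫ t in (0:ℝ)..R, Real.log t * Real.exp (-t) := by
  have hi : IntervalIntegrable (fun t : ℝ => Real.log t * Real.exp (-t)) volume 0 R :=
    (intervalIntegrable_iff_integrableOn_Ioc_of_le hR.le).2
      (log_exp_integral.1.mono_set Set.Ioc_subset_Ioi_self)
  have hd : IntervalIntegrable bcsD volume 0 R := bcsD_cont.intervalIntegrable _ _
  have key : ∫ t in (0:ℝ)..R, (bcsD t + Real.log t * Real.exp (-t)) =
      (1 - Real.exp (-R)) * Real.log R - 0 := by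
    refine intervalIntegral.integral_eq_sub_of_hasDerivAt_of_tendsto
      (f := fun x => (1 - Real.exp (-x)) * Real.log x) hR ?_ (hd.add hi) ?_ ?_
    · intro x hx
      have hx0 : x ≠ 0 := hx.1.ne'
      have := (((hasDerivAt_neg x).exp).const_sub 1).mul (Real.hasDerivAt_log hx0)
      refine this.congr_deriv ?_
      rw [bcsD_eq hx0]
      simp
      ring
    · have h1 : Tendsto (fun x : ℝ => bcsD x * (Real.log x * x)) (nhdsWithin 0 (Set.Ioi 0))
          (nhds (bcsD 0 * 0)) := by
        refine (bcsD_cont.continuousAt.tendsto.mono_left nhdsWithin_le_nhds).mul ?_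
        simpa using tendsto_log_mul_rpow_nhdsGT_zero (r := 1) one_pos
      rw [mul_zero] at h1
      refine h1.congr' ?_
      filter_upwards [self_mem_nhdsWithin] with x hx
      have hx0 : x ≠ 0 := ne_of_gt hx
      rw [bcsD_eq hx0]
      field_simp
    · have : ContinuousAt (fun x => (1 - Real.exp (-x)) * Real.log x) R :=
        ContinuousAt.mul (by fun_prop) (Real.continuousAt_log hR.ne')
      exact this.tendsto.mono_left nhdsWithin_le_nhds
  rw [intervalIntegral.integral_add hd hi] at key
  unfold bcsE
  linarith

lemma bcsE_tendsto :
    Tendsto (fun R => bcsE R - Real.log R) atTop (nhds Real.eulerMascheroniConstant) := by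
  have h1 : Tendsto (fun R : ℝ => ∫ t in (0:ℝ)..R, Real.log t * Real.exp (-t)) atTop
      (nhds (-Real.eulerMascheroniConstant)) := by
    rw [← log_exp_integral.2]
    exact intervalIntegral_tendsto_integral_Ioi 0 log_exp_integral.1 tendsto_id
  have h2 : Tendsto (fun R : ℝ => Real.log R * Real.exp (-R)) atTop (nhds 0) := by
    have h3 := Real.tendsto_pow_mul_exp_neg_atTop_nhds_zero 1
    refine squeeze_zero' ?_ ?_ h3
    · filter_upwards [eventually_ge_atTop 1] with R hR
      exact mul_nonneg (Real.log_nonneg hR) (Real.exp_pos _).le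
    · filter_upwards [eventually_ge_atTop 1] with R hR
      have := Real.log_le_sub_one_of_pos (by linarith : 0 < R)
      rw [pow_one]
      gcongr
      linarith
  have h5 := (h2.neg).sub h1
  simp only [neg_zero, zero_sub, neg_neg] at h5
  refine h5.congr' ?_
  filter_upwards [eventually_gt_atTop 0] with R hR
  rw [bcsE_eq hR]
  ring

noncomputable def bcsT : ℝ → ℝ := dslope Real.tanh 0

lemma bcs_tanh_fun : Real.tanh = fun x => Real.sinh x / Real.cosh x := by
  ext x; exact Real.tanh_eq_sinh_div_cosh x

lemma bcs_tanh_diff : Differentiable ℝ Real.tanh := by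
  rw [bcs_tanh_fun]
  exact Real.differentiable_sinh.div Real.differentiable_cosh (fun x => (Real.cosh_pos x).ne')

lemma bcsT_cont : Continuous bcsT := by
  have h := (continuousOn_dslope (f := Real.tanh) (a := 0)
    (s := Set.univ) Filter.univ_mem).2 ⟨bcs_tanh_diff.continuous.continuousOn, bcs_tanh_diff 0⟩
  exact continuousOn_univ.1 h

lemma bcsT_eq {x : ℝ} (hx : x ≠ 0) : bcsT x = Real.tanh x / x := by
  rw [bcsT, dslope_of_ne _ hx, slope_def_field]; simp

lemma bcsT_zero : bcsT 0 = 1 := by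
  rw [bcsT, dslope_same]
  have h : HasDerivAt Real.tanh 1 0 := by
    rw [bcs_tanh_fun]
    refine ((Real.hasDerivAt_sinh 0).div (Real.hasDerivAt_cosh 0) (Real.cosh_pos 0).ne').congr_deriv ?_
    simp
  exact h.deriv

lemma mul_bcsT (x : ℝ) : x * bcsT x = Real.tanh x := by
  by_cases hx : x = 0
  · simp [hx]
  · rw [bcsT_eq hx]; field_simp

lemma bcsT_even (x : ℝ) : bcsT (-x) = bcsT x := by
  by_cases hx : x = 0
  · simp [hx]
  · rw [bcsT_eq hx, bcsT_eq (neg_ne_zero.2 hx), Real.tanh_neg, neg_div_neg_eq]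

noncomputable def bcsd (c x : ℝ) : ℝ := c * bcsD (c * x)

lemma bcsd_cont (c : ℝ) : Continuous (bcsd c) := by
  unfold bcsd
  exact continuous_const.mul (bcsD_cont.comp (continuous_const.mul continuous_id))

lemma bcsd_eq {c x : ℝ} (hc : 0 < c) (hx : 0 < x) : x * bcsd c x = 1 - Real.exp (-(c * x)) := by
  rw [bcsd, bcsD_eq (by positivity)]; field_simp

lemma bcsd_int (c R : ℝ) : ∫ x in (0:ℝ)..R, bcsd c x = bcsE (c * R) := by
  unfold bcsd bcsE
  rw [intervalIntegral.integral_const_mul, intervalIntegral.mul_integral_comp_mul_left, mul_zero]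

/-- generic alternating sum -/
noncomputable def bcsU (f : ℝ → ℝ) (k : ℕ) : ℝ :=
  f 2 - ∑ i ∈ Finset.range k, (2 * f (4 * i + 4) - f (4 * i + 2) - f (4 * i + 6))

noncomputable def bcsL (f : ℝ → ℝ) (k : ℕ) : ℝ :=
  bcsU f k - (f (4 * k + 4) - f (4 * k + 2))

lemma bcsU_cont (k : ℕ) : Continuous (fun x => bcsU (fun c => bcsd c x) k) := by
  unfold bcsU
  have := bcsd_cont
  fun_prop

lemma bcsL_cont (k : ℕ) : Continuous (fun x => bcsL (fun c => bcsd c x) k) := by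
  unfold bcsL
  have := bcsd_cont
  have := bcsU_cont k
  fun_prop

lemma bcsU_int (k : ℕ) (R : ℝ) :
    ∫ x in (0:ℝ)..R, bcsU (fun c => bcsd c x) k = bcsU (fun c => bcsE (c * R)) k := by
  have hi : ∀ c, IntervalIntegrable (bcsd c) volume 0 R :=
    fun c => (bcsd_cont c).intervalIntegrable _ _
  unfold bcsU
  rw [intervalIntegral.integral_sub (hi _), intervalIntegral.integral_finsetSum, bcsd_int]
  · congr 1
    refine Finset.sum_congr rfl fun i _ => ?_
    rw [intervalIntegral.integral_sub (((hi _).const_mul _).sub (hi _)) (hi _),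
      intervalIntegral.integral_sub ((hi _).const_mul _) (hi _),
      intervalIntegral.integral_const_mul, bcsd_int, bcsd_int, bcsd_int]
  · intro i _
    exact ((((hi _).const_mul _).sub (hi _)).sub (hi _))
  · have := bcsd_cont
    apply Continuous.intervalIntegrable
    fun_prop

lemma bcsL_int (k : ℕ) (R : ℝ) :
    ∫ x in (0:ℝ)..R, bcsL (fun c => bcsd c x) k = bcsL (fun c => bcsE (c * R)) k := by
  have hi : ∀ c, IntervalIntegrable (bcsd c) volume 0 R :=
    fun c => (bcsd_cont c).intervalIntegrable _ _
  unfold bcsL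
  rw [intervalIntegral.integral_sub ((bcsU_cont k).intervalIntegrable _ _) ((hi _).sub (hi _)),
    intervalIntegral.integral_sub (hi _) (hi _), bcsU_int, bcsd_int, bcsd_int]

lemma bcs_exp (x : ℝ) (n : ℕ) (c : ℝ) (hc : c = 2 * n) :
    Real.exp (-(c * x)) = Real.exp (-(2 * x)) ^ n := by
  rw [← Real.exp_nat_mul, hc]; congr 1; ring

lemma bcsU_pt (k : ℕ) {x : ℝ} (hx : 0 < x) :
    x * bcsU (fun c => bcsd c x) k * (1 + Real.exp (-(2 * x))) =
      (1 - Real.exp (-(2 * x))) * (1 + Real.exp (-(2 * x)) ^ (2 * k + 1)) := by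
  induction k with
  | zero =>
    simp only [bcsU, Finset.range_zero, Finset.sum_empty, sub_zero]
    rw [bcsd_eq two_pos hx]; ring
  | succ k ih =>
    have h4 := bcsd_eq (c := 4 * (k:ℝ) + 4) (by positivity) hx
    have h2 := bcsd_eq (c := 4 * (k:ℝ) + 2) (by positivity) hx
    have h6 := bcsd_eq (c := 4 * (k:ℝ) + 6) (by positivity) hx
    rw [bcs_exp x (2 * k + 2) _ (by push_cast; ring)] at h4
    rw [bcs_exp x (2 * k + 1) _ (by push_cast; ring)] at h2
    rw [bcs_exp x (2 * k + 3) _ (by push_cast; ring)] at h6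
    have hs : bcsU (fun c => bcsd c x) (k + 1) = bcsU (fun c => bcsd c x) k -
        (2 * bcsd (4 * k + 4) x - bcsd (4 * k + 2) x - bcsd (4 * k + 6) x) := by
      simp only [bcsU, Finset.sum_range_succ]; ring
    rw [hs]
    linear_combination ih - (1 + Real.exp (-(2 * x))) * (2 * h4 - h2 - h6)

lemma bcsL_pt (k : ℕ) {x : ℝ} (hx : 0 < x) :
    x * bcsL (fun c => bcsd c x) k * (1 + Real.exp (-(2 * x))) =
      (1 - Real.exp (-(2 * x))) * (1 - Real.exp (-(2 * x)) ^ (2 * k + 2)) := by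
  have ih := bcsU_pt k hx
  have h4 := bcsd_eq (c := 4 * (k:ℝ) + 4) (by positivity) hx
  have h2 := bcsd_eq (c := 4 * (k:ℝ) + 2) (by positivity) hx
  rw [bcs_exp x (2 * k + 2) _ (by push_cast; ring)] at h4
  rw [bcs_exp x (2 * k + 1) _ (by push_cast; ring)] at h2
  unfold bcsL
  linear_combination ih - (1 + Real.exp (-(2 * x))) * (h4 - h2)

lemma bcsT_pt (x : ℝ) :
    x * bcsT x * (1 + Real.exp (-(2 * x))) = 1 - Real.exp (-(2 * x)) := by
  rw [mul_bcsT, Real.tanh_eq]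
  have h : Real.exp (-(2 * x)) = Real.exp (-x) * Real.exp (-x) := by
    rw [← Real.exp_add]; congr 1; ring
  have h1 : Real.exp x * Real.exp (-x) = 1 := by rw [← Real.exp_add]; simp
  have := Real.exp_pos x
  have := Real.exp_pos (-x)
  rw [h]
  field_simp
  linear_combination (2 * Real.exp (-x)) * h1

lemma bcs_le_of {x q a b : ℝ} (hx : 0 < x) (hq : 0 < q) (h : x * a * (1 + q) ≤ x * b * (1 + q)) :
    a ≤ b := by
  have h1 : x * a ≤ x * b := le_of_mul_le_mul_right h (by linarith)
  exact le_of_mul_le_mul_left h1 hx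

lemma bcsT_le (k : ℕ) {x : ℝ} (hx : 0 < x) : bcsT x ≤ bcsU (fun c => bcsd c x) k := by
  refine bcs_le_of hx (Real.exp_pos (-(2 * x))) ?_
  rw [bcsT_pt, bcsU_pt k hx]
  have h1 : Real.exp (-(2 * x)) ≤ 1 := by rw [Real.exp_le_one_iff]; linarith
  have h2 := pow_pos (Real.exp_pos (-(2 * x))) (2 * k + 1)
  nlinarith

lemma bcsL_le (k : ℕ) {x : ℝ} (hx : 0 < x) : bcsL (fun c => bcsd c x) k ≤ bcsT x := by
  refine bcs_le_of hx (Real.exp_pos (-(2 * x))) ?_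
  rw [bcsT_pt, bcsL_pt k hx]
  have h1 : Real.exp (-(2 * x)) ≤ 1 := by rw [Real.exp_le_one_iff]; linarith
  have h2 := pow_pos (Real.exp_pos (-(2 * x))) (2 * k + 2)
  nlinarith

noncomputable def bcsA (R : ℝ) : ℝ := ∫ x in (0:ℝ)..R, bcsT x

lemma bcsA_le (k : ℕ) {R : ℝ} (hR : 0 < R) : bcsA R ≤ bcsU (fun c => bcsE (c * R)) k := by
  rw [← bcsU_int]
  refine intervalIntegral.integral_mono_on_of_le_Ioo hR.le (bcsT_cont.intervalIntegrable _ _)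
    ((bcsU_cont k).intervalIntegrable _ _) fun x hx => bcsT_le k hx.1

lemma le_bcsA (k : ℕ) {R : ℝ} (hR : 0 < R) : bcsL (fun c => bcsE (c * R)) k ≤ bcsA R := by
  rw [← bcsL_int]
  refine intervalIntegral.integral_mono_on_of_le_Ioo hR.le
    ((bcsL_cont k).intervalIntegrable _ _) (bcsT_cont.intervalIntegrable _ _) fun x hx => bcsL_le k hx.1

lemma bcsE_tendsto' {c : ℝ} (hc : 0 < c) :
    Tendsto (fun R => bcsE (c * R) - Real.log R) atTop
      (nhds (Real.eulerMascheroniConstant + Real.log c)) := by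
  have h1 : Tendsto (fun R : ℝ => c * R) atTop atTop := tendsto_id.const_mul_atTop hc
  refine ((bcsE_tendsto.comp h1).add_const (Real.log c)).congr' ?_
  filter_upwards [eventually_gt_atTop 0] with R hR
  simp only [Function.comp]
  rw [Real.log_mul hc.ne' hR.ne']; ring

lemma bcsU_shift (f : ℝ → ℝ) (a : ℝ) (k : ℕ) : bcsU (fun c => f c - a) k = bcsU f k - a := by
  unfold bcsU
  have : ∀ i : ℕ, (2 * (f (4 * i + 4) - a) - (f (4 * i + 2) - a) - (f (4 * i + 6) - a)) =
    (2 * f (4 * i + 4) - f (4 * i + 2) - f (4 * i + 6)) := fun i => by ring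
  simp only [this]; ring

lemma bcsU_lim (k : ℕ) :
    Tendsto (fun R => bcsU (fun c => bcsE (c * R)) k - Real.log R) atTop
      (nhds (Real.eulerMascheroniConstant + bcsU Real.log k)) := by
  simp only [← bcsU_shift]
  rw [← sub_neg_eq_add, sub_eq_add_neg, neg_neg, add_comm]
  have : bcsU Real.log k + Real.eulerMascheroniConstant =
      bcsU (fun c => Real.eulerMascheroniConstant + Real.log c) k := by
    have := bcsU_shift Real.log (-Real.eulerMascheroniConstant) k
    simp only [sub_neg_eq_add] at this
    rw [← this]; simp only [add_comm]
  rw [this]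
  unfold bcsU
  refine (bcsE_tendsto' two_pos).sub (tendsto_finsetSum _ fun i _ => ?_)
  exact (((bcsE_tendsto' (by positivity)).const_mul _).sub (bcsE_tendsto' (by positivity))).sub
    (bcsE_tendsto' (by positivity))

lemma bcsL_lim (k : ℕ) :
    Tendsto (fun R => bcsL (fun c => bcsE (c * R)) k - Real.log R) atTop
      (nhds (Real.eulerMascheroniConstant + bcsL Real.log k)) := by
  have h := (bcsU_lim k).sub ((bcsE_tendsto' (c := 4 * k + 4) (by positivity)).sub
    (bcsE_tendsto' (c := 4 * k + 2) (by positivity)))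
  unfold bcsL
  convert h using 2
  · ring
  · ring

lemma bcsU_log (k : ℕ) : bcsU Real.log k = Real.log 2 -
    Real.log (∏ i ∈ Finset.range k,
      (2 * (i:ℝ) + 2) / (2 * ↑i + 1) * ((2 * ↑i + 2) / (2 * ↑i + 3))) := by
  rw [Real.log_prod (fun i _ => by positivity)]
  unfold bcsU
  congr 1
  refine Finset.sum_congr rfl fun i _ => ?_
  rw [Real.log_mul (by positivity) (by positivity), Real.log_div (by positivity) (by positivity),
    Real.log_div (by positivity) (by positivity),
    show (4 * (i:ℝ) + 4) = 2 * (2 * i + 2) by ring, show (4 * (i:ℝ) + 2) = 2 * (2 * i + 1) by ring,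
    show (4 * (i:ℝ) + 6) = 2 * (2 * i + 3) by ring, Real.log_mul (by positivity) (by positivity),
    Real.log_mul (by positivity) (by positivity), Real.log_mul (by positivity) (by positivity)]
  ring

lemma bcsU_log_lim : Tendsto (bcsU Real.log) atTop (nhds (Real.log (4 / π))) := by
  have h := (Real.tendsto_prod_pi_div_two.log (by positivity)).const_sub (Real.log 2)
  have e : Real.log 2 - Real.log (π / 2) = Real.log (4 / π) := by
    rw [← Real.log_div (by positivity) (by positivity)]; congr 1; field_simp; norm_num
  rw [e] at h
  exact h.congr fun k => (bcsU_log k).symm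

lemma bcsL_log_lim : Tendsto (bcsL Real.log) atTop (nhds (Real.log (4 / π))) := by
  have h1 : Tendsto (fun k : ℕ => Real.log (4 * (k:ℝ) + 4) - Real.log (4 * (k:ℝ) + 2)) atTop
      (nhds 0) := by
    have h2 : Tendsto (fun k : ℕ => 1 / ((k:ℝ) + 1)) atTop (nhds 0) :=
      tendsto_one_div_add_atTop_nhds_zero_nat
    refine squeeze_zero (fun k => ?_) (fun k => ?_) h2
    · exact sub_nonneg.2 (Real.log_le_log (by positivity) (by linarith))
    · rw [← Real.log_div (by positivity) (by positivity)]
      refine (Real.log_le_sub_one_of_pos (by positivity)).trans ?_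
      rw [div_sub_one (by positivity), div_le_div_iff₀ (by positivity) (by positivity)]
      nlinarith [(Nat.cast_nonneg k : (0:ℝ) ≤ k)]
  have := bcsU_log_lim.sub h1
  rw [sub_zero] at this
  exact this

lemma bcsA_lim : Tendsto (fun R => bcsA R - Real.log R) atTop
    (nhds (Real.eulerMascheroniConstant + Real.log (4 / π))) := by
  rw [tendsto_order]
  constructor
  · intro a ha
    obtain ⟨k, hk⟩ := ((bcsL_log_lim.const_add Real.eulerMascheroniConstant).eventually
      (lt_mem_nhds ha)).exists
    filter_upwards [(bcsL_lim k).eventually (lt_mem_nhds hk), eventually_gt_atTop 0] with R h hR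
    have := le_bcsA k hR
    linarith
  · intro a ha
    obtain ⟨k, hk⟩ := ((bcsU_log_lim.const_add Real.eulerMascheroniConstant).eventually
      (gt_mem_nhds ha)).exists
    filter_upwards [(bcsU_lim k).eventually (gt_mem_nhds hk), eventually_gt_atTop 0] with R h hR
    have := bcsA_le k hR
    linarith

noncomputable def bcsP (R v : ℝ) : ℝ := R * bcsT (R * v)

lemma bcsP_cont (R : ℝ) : Continuous (bcsP R) := by
  unfold bcsP
  exact continuous_const.mul (bcsT_cont.comp (continuous_const.mul continuous_id))

lemma mul_bcsP (R v : ℝ) : v * bcsP R v = Real.tanh (R * v) := by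
  rw [← mul_bcsT, bcsP]; ring

lemma bcs_main_int (R : ℝ) :
    ∫ s in (0:ℝ)..√2, s * bcsP R (s ^ 2 - 1) = bcsA R := by
  have h := intervalIntegral.integral_comp_mul_deriv (a := 0) (b := √2)
    (f := fun s => R * (s ^ 2 - 1)) (f' := fun s => R * (2 * s)) (g := bcsT)
    (fun x _ => by
      have := ((hasDerivAt_pow 2 x).sub_const 1).const_mul R
      simpa using this) (by fun_prop) bcsT_cont
  have e1 : ∫ x in (0:ℝ)..√2, (bcsT ∘ fun s => R * (s ^ 2 - 1)) x * (R * (2 * x)) =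
      2 * ∫ s in (0:ℝ)..√2, s * bcsP R (s ^ 2 - 1) := by
    rw [← intervalIntegral.integral_const_mul]
    congr 1
    ext s
    simp only [Function.comp, bcsP]; ring
  have hii : ∀ a b, IntervalIntegrable bcsT volume a b := fun a b => bcsT_cont.intervalIntegrable a b
  have e2 : ∫ x in (-R)..0, bcsT x = bcsA R := by
    have := intervalIntegral.integral_comp_neg (a := 0) (b := R) (f := bcsT)
    simp only [bcsT_even, neg_zero] at this
    exact this.symm
  have e3 : ∫ x in (-R)..R, bcsT x = 2 * bcsA R := by
    rw [← intervalIntegral.integral_add_adjacent_intervals (hii (-R) 0) (hii 0 R), e2, bcsA]; ring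
  rw [e1] at h
  have e4 : R * ((0:ℝ) ^ 2 - 1) = -R := by ring
  have e5 : R * ((√2) ^ 2 - 1) = R := by rw [Real.sq_sqrt two_pos.le]; ring
  rw [e4, e5, e3] at h
  linarith

noncomputable def bcsG (R s : ℝ) : ℝ :=
  (s ^ 2 * bcsP R (s ^ 2 - 1) - 1) -
    (Set.Iic √2).indicator (fun s => s * bcsP R (s ^ 2 - 1)) s

noncomputable def bcsGinf (s : ℝ) : ℝ :=
  if s ≤ 1 then -s / (s + 1) - 1 else if s ≤ √2 then s / (s + 1) - 1 else 1 / (s ^ 2 - 1)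

noncomputable def bcsB (s : ℝ) : ℝ := if s ≤ √2 then 2 else 8 * s ^ (-2 : ℝ)

lemma one_sub_tanh_le {x : ℝ} (hx : 0 < x) : 1 - Real.tanh x ≤ 1 / x := by
  have h := bcsT_pt x
  rw [mul_bcsT] at h
  have hp := Real.exp_pos (-(2 * x))
  have h1 : Real.exp (-(2 * x)) * (1 + 2 * x) ≤ 1 := by
    have h2 := Real.add_one_le_exp (2 * x)
    have h3 : Real.exp (-(2 * x)) * Real.exp (2 * x) = 1 := by rw [← Real.exp_add]; simp
    nlinarith
  set q := Real.exp (-(2 * x)) with hq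
  have h4 : 1 - Real.tanh x = 2 * q / (1 + q) := by
    field_simp
    linarith
  rw [h4, div_le_div_iff₀ (by positivity) hx]
  nlinarith

lemma bcs_tanh_top : Tendsto Real.tanh atTop (nhds 1) := by
  have h : Tendsto (fun x : ℝ => 1 - 1 / x) atTop (nhds 1) := by
    have := (tendsto_inv_atTop_zero (𝕜 := ℝ)).const_sub 1
    simpa using this
  refine tendsto_of_tendsto_of_tendsto_of_le_of_le' h tendsto_const_nhds ?_ ?_
  · filter_upwards [eventually_gt_atTop 0] with x hx
    have := one_sub_tanh_le hx
    linarith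
  · exact Eventually.of_forall fun x => (Real.tanh_lt_one x).le

lemma bcsG_low {R s : ℝ} (hs : 0 < s) (h : s ≤ √2) :
    bcsG R s = s / (s + 1) * Real.tanh (R * (s ^ 2 - 1)) - 1 := by
  rw [bcsG, Set.indicator_of_mem (by exact h), ← mul_bcsP]
  field_simp
  ring

lemma bcs_one_lt_sq {s : ℝ} (h : √2 < s) : 2 < s ^ 2 := by
  have := Real.lt_sq_of_sqrt_lt h
  exact this

lemma bcsG_high {R s : ℝ} (h : √2 < s) :
    bcsG R s = s ^ 2 / (s ^ 2 - 1) * Real.tanh (R * (s ^ 2 - 1)) - 1 := by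
  have h2 := bcs_one_lt_sq h
  have h3 : s ^ 2 - 1 ≠ 0 := by linarith
  rw [bcsG, Set.indicator_of_notMem (by simpa using h), ← mul_bcsP]
  field_simp
  ring

lemma bcsG_bound {R s : ℝ} (hR : 1 / 2 ≤ R) (hs : 0 < s) : ‖bcsG R s‖ ≤ bcsB s := by
  rw [Real.norm_eq_abs, bcsB]
  split_ifs with h
  · rw [bcsG_low hs h]
    have h1 := abs_le.1 (Real.abs_tanh_lt_one (R * (s ^ 2 - 1))).le
    have h2 : 0 ≤ s / (s + 1) := by positivity
    have h3 : s / (s + 1) ≤ 1 := by rw [div_le_one (by positivity)]; linarith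
    rw [abs_le]
    constructor <;> nlinarith [h1.1, h1.2]
  · push Not at h
    rw [bcsG_high h]
    have h2 := bcs_one_lt_sq h
    have hv : 0 < s ^ 2 - 1 := by linarith
    have hR0 : 0 < R := by linarith
    have h4 := one_sub_tanh_le (mul_pos hR0 hv)
    have h5 := Real.tanh_lt_one (R * (s ^ 2 - 1))
    have h6 : 1 / (R * (s ^ 2 - 1)) ≤ 4 / s ^ 2 := by
      rw [div_le_div_iff₀ (by positivity) (by positivity)]
      nlinarith
    have h7 : s ^ 2 / (s ^ 2 - 1) ≤ 2 := by rw [div_le_iff₀ hv]; linarith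
    have h8 : 0 ≤ s ^ 2 / (s ^ 2 - 1) := by positivity
    have h9 : s ^ 2 / (s ^ 2 - 1) = 1 + 1 / (s ^ 2 - 1) := by field_simp; ring
    have h10 : 1 / (s ^ 2 - 1) ≤ 2 / s ^ 2 := by
      rw [div_le_div_iff₀ (by positivity) (by positivity)]
      nlinarith
    have h11 : 0 ≤ 1 / (s ^ 2 - 1) := by positivity
    have e : s ^ (-2 : ℝ) = 1 / s ^ 2 := by
      rw [Real.rpow_neg hs.le]; norm_num
    rw [e, abs_le]
    set τ := Real.tanh (R * (s ^ 2 - 1))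
    set w := s ^ 2 / (s ^ 2 - 1)
    have e2 : w * τ - 1 = 1 / (s ^ 2 - 1) - w * (1 - τ) := by rw [mul_sub, mul_one, h9]; ring
    have e3 : 4 / s ^ 2 = 4 * (1 / s ^ 2) := by ring
    have e4 : 2 / s ^ 2 = 2 * (1 / s ^ 2) := by ring
    have e5 : 0 < 1 / s ^ 2 := by positivity
    have e6 : w * (1 - τ) ≤ 2 * (4 / s ^ 2) :=
      mul_le_mul h7 (h4.trans h6) (by linarith) (by norm_num)
    have e7 : 0 ≤ w * (1 - τ) := mul_nonneg h8 (by linarith)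
    rw [e2]
    constructor <;> linarith

lemma bcs_sqrt2 : (1:ℝ) < √2 := by
  rw [Real.lt_sqrt] <;> norm_num

lemma bcs_split : Set.Ioi (0:ℝ) = Set.Ioc 0 √2 ∪ Set.Ioi √2 :=
  (Set.Ioc_union_Ioi_eq_Ioi (by positivity)).symm

lemma bcsB_int : IntegrableOn bcsB (Set.Ioi 0) := by
  rw [bcs_split]
  refine IntegrableOn.union ?_ ?_
  · have : IntegrableOn (fun _ : ℝ => (2:ℝ)) (Set.Ioc 0 √2) := by
      exact integrableOn_const (by simp)
    exact this.congr_fun (fun s hs => by simp [bcsB, hs.2]) measurableSet_Ioc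
  · have : IntegrableOn (fun s : ℝ => 8 * s ^ (-2 : ℝ)) (Set.Ioi √2) :=
      (integrableOn_Ioi_rpow_of_lt (by norm_num) (by positivity)).const_mul 8
    exact this.congr_fun (fun s hs => by
      simp [bcsB, not_le.2 (show √2 < s from hs)]) measurableSet_Ioi

lemma bcsG_meas (R : ℝ) : Measurable (bcsG R) := by
  have h : Continuous fun s : ℝ => bcsP R (s ^ 2 - 1) := (bcsP_cont R).comp (by fun_prop)
  unfold bcsG
  refine Measurable.sub (by fun_prop) (Measurable.indicator (by fun_prop) measurableSet_Iic)

lemma bcsG_lim {s : ℝ} (hs : 0 < s) (h1 : s ≠ 1) :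
    Tendsto (fun R => bcsG R s) atTop (nhds (bcsGinf s)) := by
  have pos : 1 < s → Tendsto (fun R : ℝ => Real.tanh (R * (s ^ 2 - 1))) atTop (nhds 1) := by
    intro h
    exact bcs_tanh_top.comp (tendsto_id.atTop_mul_const (by nlinarith))
  rcases lt_or_gt_of_ne h1 with h | h
  · have h2 : Tendsto (fun R : ℝ => Real.tanh (R * (s ^ 2 - 1))) atTop (nhds (-1)) := by
      have : Tendsto (fun R : ℝ => Real.tanh (R * (1 - s ^ 2))) atTop (nhds 1) :=
        bcs_tanh_top.comp (tendsto_id.atTop_mul_const (by nlinarith))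
      refine this.neg.congr fun R => ?_
      rw [← Real.tanh_neg]; congr 1; ring
    have hs2 : s ≤ √2 := h.le.trans bcs_sqrt2.le
    simp only [bcsG_low hs hs2]
    have e : bcsGinf s = s / (s + 1) * (-1) - 1 := by rw [bcsGinf, if_pos h.le]; ring
    rw [e]
    exact (h2.const_mul _).sub_const 1
  · by_cases hs2 : s ≤ √2
    · simp only [bcsG_low hs hs2]
      have e : bcsGinf s = s / (s + 1) * 1 - 1 := by
        rw [bcsGinf, if_neg (not_le.2 h), if_pos hs2]; ring
      rw [e]
      exact ((pos h).const_mul _).sub_const 1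
    · push Not at hs2
      simp only [bcsG_high hs2]
      have h3 : s ^ 2 - 1 ≠ 0 := by nlinarith
      have e : bcsGinf s = s ^ 2 / (s ^ 2 - 1) * 1 - 1 := by
        rw [bcsGinf, if_neg (not_le.2 h), if_neg (not_le.2 hs2)]; field_simp; ring
      rw [e]
      exact ((pos h).const_mul _).sub_const 1

lemma bcsG_int_lim : Tendsto (fun R => ∫ s in Set.Ioi (0:ℝ), bcsG R s) atTop
    (nhds (∫ s in Set.Ioi (0:ℝ), bcsGinf s)) := by
  refine tendsto_integral_filter_of_dominated_convergence bcsB ?_ ?_ bcsB_int ?_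
  · exact Eventually.of_forall fun R => (bcsG_meas R).aestronglyMeasurable
  · filter_upwards [eventually_ge_atTop (1/2)] with R hR
    exact (ae_restrict_mem measurableSet_Ioi).mono fun s hs => bcsG_bound hR hs
  · have h1 : ∀ᵐ s : ℝ ∂(volume.restrict (Set.Ioi 0)), s ≠ 1 :=
      ae_restrict_of_ae (Measure.ae_ne volume 1)
    filter_upwards [h1, ae_restrict_mem measurableSet_Ioi] with s h1 hs
    exact bcsG_lim hs h1

lemma bcsGinf_int : ∫ s in Set.Ioi (0:ℝ), bcsGinf s = -2 + 2 * Real.log 2 := by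
  have i1 : ∫ s in Set.Ioc (0:ℝ) 1, bcsGinf s = -2 + Real.log 2 ∧
      IntegrableOn bcsGinf (Set.Ioc 0 1) := by
    have hc : IntervalIntegrable (fun s : ℝ => -s / (s + 1) - 1) volume 0 1 := by
      apply ContinuousOn.intervalIntegrable
      rw [Set.uIcc_of_le zero_le_one]
      refine ContinuousOn.sub (ContinuousOn.div (by fun_prop) (by fun_prop) ?_) (by fun_prop)
      intro x hx; linarith [hx.1]
    have e : Set.EqOn (fun s : ℝ => -s / (s + 1) - 1) bcsGinf (Set.Ioc 0 1) := by
      intro s hs; simp [bcsGinf, hs.2]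
    constructor
    · rw [← setIntegral_congr_fun measurableSet_Ioc e, ← intervalIntegral.integral_of_le zero_le_one,
        intervalIntegral.integral_eq_sub_of_hasDerivAt (f := fun s => Real.log (s + 1) - 2 * s) _ hc]
      · norm_num; ring
      · intro x hx
        rw [Set.uIcc_of_le zero_le_one] at hx
        have hx1 : x + 1 ≠ 0 := by linarith [hx.1]
        have := (((hasDerivAt_id x).add_const 1).log hx1).sub ((hasDerivAt_id x).const_mul 2)
        refine this.congr_deriv ?_
        simp only [id]
        field_simp; ring
    · exact ((intervalIntegrable_iff_integrableOn_Ioc_of_le zero_le_one).1 hc).congr_fun e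
        measurableSet_Ioc
  have i2 : ∫ s in Set.Ioc (1:ℝ) √2, bcsGinf s = Real.log 2 - Real.log (√2 + 1) ∧
      IntegrableOn bcsGinf (Set.Ioc 1 √2) := by
    have hc : IntervalIntegrable (fun s : ℝ => s / (s + 1) - 1) volume 1 √2 := by
      apply ContinuousOn.intervalIntegrable
      rw [Set.uIcc_of_le bcs_sqrt2.le]
      refine ContinuousOn.sub (ContinuousOn.div (by fun_prop) (by fun_prop) ?_) (by fun_prop)
      intro x hx; linarith [hx.1]
    have e : Set.EqOn (fun s : ℝ => s / (s + 1) - 1) bcsGinf (Set.Ioc 1 √2) := by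
      intro s hs; simp only [bcsGinf]; rw [if_neg (not_le.2 hs.1), if_pos hs.2]
    constructor
    · rw [← setIntegral_congr_fun measurableSet_Ioc e,
        ← intervalIntegral.integral_of_le bcs_sqrt2.le,
        intervalIntegral.integral_eq_sub_of_hasDerivAt (f := fun s => - Real.log (s + 1)) _ hc]
      · norm_num; ring
      · intro x hx
        rw [Set.uIcc_of_le bcs_sqrt2.le] at hx
        have hx1 : x + 1 ≠ 0 := by linarith [hx.1]
        have := (((hasDerivAt_id x).add_const 1).log hx1).neg
        refine this.congr_deriv ?_
        simp only [id]
        field_simp; ring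
    · exact ((intervalIntegrable_iff_integrableOn_Ioc_of_le bcs_sqrt2.le).1 hc).congr_fun e
        measurableSet_Ioc
  have i3 : ∫ s in Set.Ioi √2, bcsGinf s = Real.log (√2 + 1) ∧
      IntegrableOn bcsGinf (Set.Ioi √2) := by
    have e : Set.EqOn (fun s : ℝ => 1 / (s ^ 2 - 1)) bcsGinf (Set.Ioi √2) := by
      intro s hs
      have hs : √2 < s := hs
      simp only [bcsGinf]; rw [if_neg (not_le.2 (bcs_sqrt2.trans hs)), if_neg (not_le.2 hs)]
    have hd : ∀ x ∈ Set.Ici √2, HasDerivAt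
        (fun s => (Real.log (s - 1) - Real.log (s + 1)) / 2) (1 / (x ^ 2 - 1)) x := by
      intro x hx
      have hx : 1 < x := bcs_sqrt2.trans_le hx
      have hx1 : x + 1 ≠ 0 := by linarith
      have hx2 : x - 1 ≠ 0 := by linarith
      have hx3 : x ^ 2 - 1 ≠ 0 := by nlinarith
      have := ((((hasDerivAt_id x).sub_const 1).log hx2).sub
        (((hasDerivAt_id x).add_const 1).log hx1)).div_const 2
      refine this.congr_deriv ?_
      simp only [id]
      field_simp; ring
    have ht : Tendsto (fun s => (Real.log (s - 1) - Real.log (s + 1)) / 2) atTop (nhds 0) := by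
      have h1 : Tendsto (fun s : ℝ => 1 - 2 / (s + 1)) atTop (nhds (1 - 0)) :=
        (tendsto_const_nhds.div_atTop (tendsto_atTop_add_const_right _ 1 tendsto_id)).const_sub 1
      rw [sub_zero] at h1
      have h2 := (h1.log one_ne_zero).div_const 2
      rw [Real.log_one, zero_div] at h2
      refine h2.congr' ?_
      filter_upwards [eventually_gt_atTop 1] with s hs
      have hx1 : s + 1 ≠ 0 := by linarith
      rw [← Real.log_div (by linarith) hx1]
      congr 2
      field_simp; ring
    have hpos : ∀ x ∈ Set.Ioi √2, 0 ≤ 1 / (x ^ 2 - 1) := by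
      intro x hx
      have := bcs_one_lt_sq hx
      exact div_nonneg zero_le_one (by linarith)
    have hI := integrableOn_Ioi_deriv_of_nonneg' hd hpos ht
    refine ⟨?_, hI.congr_fun e measurableSet_Ioi⟩
    rw [← setIntegral_congr_fun measurableSet_Ioi e,
      integral_Ioi_of_hasDerivAt_of_tendsto' hd hI ht]
    have h1 : (√2 - 1) = (√2 + 1)⁻¹ := by
      apply eq_inv_of_mul_eq_one_left
      have := Real.sq_sqrt (two_pos (α := ℝ)).le
      linarith
    rw [h1, Real.log_inv]; ring
  rw [← Set.Ioc_union_Ioi_eq_Ioi (zero_le_one (α := ℝ)),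
    setIntegral_union (Set.Ioc_disjoint_Ioi le_rfl) measurableSet_Ioi i1.2 ?_,
    ← Set.Ioc_union_Ioi_eq_Ioi bcs_sqrt2.le,
    setIntegral_union (Set.Ioc_disjoint_Ioi le_rfl) measurableSet_Ioi i2.2 i3.2, i1.1, i2.1, i3.1]
  · ring
  · rw [← Set.Ioc_union_Ioi_eq_Ioi bcs_sqrt2.le]
    exact i2.2.union i3.2

noncomputable def bcsI (R : ℝ) : ℝ := ∫ s in Set.Ioi (0:ℝ), (s ^ 2 * bcsP R (s ^ 2 - 1) - 1)

lemma bcsI_eq {R : ℝ} (hR : 1 / 2 ≤ R) : bcsI R = (∫ s in Set.Ioi (0:ℝ), bcsG R s) + bcsA R := by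
  have hc : Continuous fun s : ℝ => s * bcsP R (s ^ 2 - 1) :=
    continuous_id.mul ((bcsP_cont R).comp (by fun_prop))
  have hG : IntegrableOn (bcsG R) (Set.Ioi 0) :=
    Integrable.mono' bcsB_int (bcsG_meas R).aestronglyMeasurable
      ((ae_restrict_mem measurableSet_Ioi).mono fun s hs => bcsG_bound hR hs)
  have e : Set.Ioi (0:ℝ) ∩ Set.Iic √2 = Set.Ioc 0 √2 := Set.Ioi_inter_Iic
  have hC : IntegrableOn ((Set.Iic √2).indicator (fun s => s * bcsP R (s ^ 2 - 1))) (Set.Ioi 0) := by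
    rw [IntegrableOn, integrable_indicator_iff measurableSet_Iic, IntegrableOn,
      Measure.restrict_restrict measurableSet_Iic, Set.inter_comm, e]
    exact (hc.intervalIntegrable 0 √2).1
  rw [← bcs_main_int, intervalIntegral.integral_of_le (by positivity), ← e,
    ← setIntegral_indicator measurableSet_Iic, ← integral_add hG hC, bcsI]
  congr 1
  ext s
  rw [bcsG]; ring

lemma bcsI_lim : Tendsto (fun R => bcsI R - Real.log R) atTop
    (nhds (-2 + 2 * Real.log 2 + (Real.eulerMascheroniConstant + Real.log (4 / π)))) := by
  have h := bcsG_int_lim.add bcsA_lim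
  rw [bcsGinf_int] at h
  refine h.congr' ?_
  filter_upwards [eventually_ge_atTop (1/2)] with R hR
  rw [bcsI_eq hR]; ring

lemma bcs_K {T : ℝ} (hT : 0 < T) (v : ℝ) :
    (if v = 0 then 2 * T else v * (Real.exp (v / T) + 1) / (Real.exp (v / T) - 1))⁻¹ =
      bcsP (1 / (2 * T)) v := by
  unfold bcsP
  split_ifs with h
  · rw [h, mul_zero, bcsT_zero]; simp
  · have hx : 1 / (2 * T) * v ≠ 0 := mul_ne_zero (by positivity) h
    have e1 : Real.exp (v / T) = Real.exp (1 / (2 * T) * v) * Real.exp (1 / (2 * T) * v) := by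
      rw [← Real.exp_add]; congr 1; field_simp; ring
    rw [bcsT_eq hx, Real.tanh_eq, Real.exp_neg, e1]
    have hy : Real.exp (1 / (2 * T) * v) ≠ 1 := by rwa [Ne, Real.exp_eq_one_iff]
    have hp := Real.exp_pos (1 / (2 * T) * v)
    set y := Real.exp (1 / (2 * T) * v)
    have hy2 : y * y - 1 ≠ 0 := by
      intro h0
      have : (y - 1) * (y + 1) = 0 := by linarith
      rcases mul_eq_zero.1 this with h | h
      · exact hy (by linarith)
      · linarith
    rw [inv_div]
    have : y * y + 1 ≠ 0 := by positivity
    field_simp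

lemma bcs_reduce {μ T : ℝ} (hμ : 0 < μ) (hT : 0 < T) :
    (1 / (4 * π * μ)) *
          ∫ p : EuclideanSpace ℝ (Fin 3),
            ((if ‖p‖ ^ 2 = μ then 2 * T
              else (‖p‖ ^ 2 - μ) * (Real.exp ((‖p‖ ^ 2 - μ) / T) + 1) /
                (Real.exp ((‖p‖ ^ 2 - μ) / T) - 1))⁻¹ - (‖p‖ ^ 2)⁻¹) =
      μ ^ (-(1 : ℝ) / 2) * bcsI (μ / (2 * T)) := by
  have e : ∀ p : EuclideanSpace ℝ (Fin 3), ((if ‖p‖ ^ 2 = μ then 2 * T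
              else (‖p‖ ^ 2 - μ) * (Real.exp ((‖p‖ ^ 2 - μ) / T) + 1) /
                (Real.exp ((‖p‖ ^ 2 - μ) / T) - 1))⁻¹ - (‖p‖ ^ 2)⁻¹) =
      (fun r : ℝ => bcsP (1 / (2 * T)) (r ^ 2 - μ) - (r ^ 2)⁻¹) ‖p‖ := by
    intro p
    have := bcs_K hT (‖p‖ ^ 2 - μ)
    simp only [sub_eq_zero] at this
    simp only [this]
  simp only [e]
  rw [integral_fun_norm_addHaar volume
    (fun r : ℝ => bcsP (1 / (2 * T)) (r ^ 2 - μ) - (r ^ 2)⁻¹)]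
  have hvol : (volume : Measure (EuclideanSpace ℝ (Fin 3))).real (Metric.ball 0 1) = π * 4 / 3 := by
    rw [Measure.real, EuclideanSpace.volume_ball_fin_three]
    simp
    positivity
  rw [hvol]
  have hdim : Module.finrank ℝ (EuclideanSpace ℝ (Fin 3)) = 3 := by simp
  rw [hdim]
  have e2 : ∫ y in Set.Ioi (0:ℝ), y ^ (3 - 1) • (bcsP (1 / (2 * T)) (y ^ 2 - μ) - (y ^ 2)⁻¹) =
      ∫ y in Set.Ioi (0:ℝ), (y ^ 2 * bcsP (1 / (2 * T)) (y ^ 2 - μ) - 1) := by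
    refine setIntegral_congr_fun measurableSet_Ioi fun y hy => ?_
    have hy : y ≠ 0 := ne_of_gt hy
    simp only [smul_eq_mul]
    norm_num
    field_simp
  have hm : 0 < √μ := Real.sqrt_pos.2 hμ
  have e3 := integral_comp_mul_left_Ioi
    (fun y => y ^ 2 * bcsP (1 / (2 * T)) (y ^ 2 - μ) - 1) 0 hm
  have e4 : ∀ s : ℝ, (√μ * s) ^ 2 * bcsP (1 / (2 * T)) ((√μ * s) ^ 2 - μ) - 1 =
      s ^ 2 * bcsP (μ / (2 * T)) (s ^ 2 - 1) - 1 := by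
    intro s
    have : 1 / (2 * T) * (μ * s ^ 2 - μ) = μ / (2 * T) * (s ^ 2 - 1) := by ring
    rw [mul_pow, Real.sq_sqrt hμ.le, bcsP, bcsP, this]; ring
  simp only [e4, mul_zero, smul_eq_mul] at e3
  rw [e2, bcsI, e3]
  have e5 : μ ^ (-(1 : ℝ) / 2) = (√μ)⁻¹ := by
    rw [neg_div, Real.rpow_neg hμ.le, Real.sqrt_eq_rpow]
  rw [e5]
  set J := ∫ y in Set.Ioi (0:ℝ), (y ^ 2 * bcsP (1 / (2 * T)) (y ^ 2 - μ) - 1)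
  have e6 : (√μ)⁻¹ * ((√μ)⁻¹ * J) = J / μ := by
    rw [← mul_assoc, ← mul_inv, Real.mul_self_sqrt hμ.le]; ring
  rw [e6]
  have := Real.pi_pos
  simp only [smul_eq_mul, nsmul_eq_mul]
  push_cast
  field_simp

/-- Let `μ > 0` and `K_{T,μ}(p) = (p²-μ)(e^{(p²-μ)/T}+1)/(e^{(p²-μ)/T}-1)` (value `2T` on the
Fermi sphere). Then `m_μ(T) = (4πμ)⁻¹ ∫ (K_{T,μ}(p)⁻¹ - (p²)⁻¹) dp` satisfies
`m_μ(T) = μ^{-1/2}(ln(μ/T) + γ - 2 + ln(8/π) + o(1))` as `T → 0⁺`,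
where `γ` is Euler's constant. -/
theorem stmt5 (μ : ℝ) (hμ : 0 < μ) :
    ∃ err : ℝ → ℝ, Tendsto err (nhdsWithin 0 (Set.Ioi 0)) (nhds 0) ∧
      ∀ T : ℝ, 0 < T →
        (1 / (4 * π * μ)) *
          ∫ p : EuclideanSpace ℝ (Fin 3),
            ((if ‖p‖ ^ 2 = μ then 2 * T
              else (‖p‖ ^ 2 - μ) * (Real.exp ((‖p‖ ^ 2 - μ) / T) + 1) /
                (Real.exp ((‖p‖ ^ 2 - μ) / T) - 1))⁻¹ - (‖p‖ ^ 2)⁻¹) =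
        μ ^ (-(1 : ℝ) / 2) *
          (Real.log (μ / T) + Real.eulerMascheroniConstant - 2 + Real.log (8 / π) + err T) := by
  refine ⟨fun T => bcsI (μ / (2 * T)) - (Real.log (μ / T) + Real.eulerMascheroniConstant - 2 +
    Real.log (8 / π)), ?_, ?_⟩
  · have h1 : Tendsto (fun T : ℝ => μ / (2 * T)) (nhdsWithin 0 (Set.Ioi 0)) atTop := by
      refine (tendsto_inv_nhdsGT_zero.const_mul_atTop (show 0 < μ / 2 by positivity)).congr fun T => ?_
      rw [← div_eq_mul_inv, div_div]
    have h2 := (bcsI_lim.comp h1).sub_const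
      (-2 + 2 * Real.log 2 + (Real.eulerMascheroniConstant + Real.log (4 / π)))
    rw [sub_self] at h2
    refine h2.congr' ?_
    filter_upwards [self_mem_nhdsWithin] with T hT
    have hT : 0 < T := hT
    simp only [Function.comp]
    have e1 : Real.log (μ / (2 * T)) = Real.log (μ / T) - Real.log 2 := by
      rw [← Real.log_div (by positivity) (by positivity)]; congr 1; field_simp
    have e2 : Real.log (8 / π) = Real.log 2 + Real.log (4 / π) := by
      rw [← Real.log_mul (by positivity) (by positivity)]; congr 1; field_simp; norm_num
    rw [e1, e2]; ring
  · intro T hT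
    rw [bcs_reduce hμ hT]
    ring
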